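/- Let 𝒱_N = Σ_{j∈ℤ} D_j M_{b₁} D^N_j M_{b₁} and ℛ_N = Σ_{|ℓ|>N} Σ_{j∈ℤ} D_j M_{b₁} D_{j+ℓ} M_{b₁}, where D^N_j = Σ_{|ℓ|≤N} D_{j+ℓ}. Then 𝒱_N + ℛ_N = I on L²(ℝⁿ), ‖ℛ_N‖_{L²→L²} → 0 as N → ∞, and consequently 𝒱_N is invertible on L²(ℝⁿ) for N sufficiently large with ‖𝒱_N^{−1}‖ uniformly bounded. -/

import Mathlib

open MeasureTheory

/-!
The products `T j * T k` form a matrix of operators whose entries are `O(q ^ (2 * |j - k|))` for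
some `q < 1`. Strong unconditional summability of `∑ T j` bounds all its finite partial sums
uniformly, and a choice of signs turns this into boundedness of the analysis operator
`P f = (T j f)_j` into `ℓ²(ℤ, H)` and, by duality, of the synthesis operator `Q x = ∑ T j (x j)`.
With `S` the shift on `ℓ²(ℤ, H)`, the `l`-th diagonal sum is
`R_l = ∑ j, T j * T (j + l) = Q ∘ S ^ l ∘ P`; it is bounded, but this gives no decay in `l`.

For a finite partial sum `X` of `R_l`, however, the geometric mean of two bounds for
`T a * X * T b` and Schur's test give `‖P X Q‖ ≲ q ^ |l|`. Since
`𝒱_N = Q ∘ (∑_{|m| ≤ N} S ^ m) ∘ P`, the product `𝒱_N X 𝒱_N` is `O(N ^ 2 q ^ |l|)`, and so is `X` as soon as `‖1 - 𝒱_N‖ ≤ 1 / 2`. If only finitely many `T j` are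
nonzero, then `𝒱_N = 1` for large `N`, and downward induction on `N = |l|` propagates
`‖1 - 𝒱_N‖ ≤ 1 / 2` down to a threshold, independent of the number of terms, beyond which the tail
of `∑ l ^ 2 q ^ |l|` is small. Truncating the family by collapsing its two tails to single terms
then yields the decay of `R_l` in general. Hence `∑ R_l = 1` in operator norm, `𝒱_N → 1` and
`ℛ_N = 1 - 𝒱_N → 0`, and `𝒱_N` is eventually invertible.
-/

open ContinuousLinearMap Filter Topology

section PartialSums

variable {𝕜 E ι κ : Type*} [NontriviallyNormedField 𝕜] [NormedAddCommGroup E] [NormedSpace 𝕜 E]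

/-- The partial sums of the family `T`, over all finite sets of indices, are bounded by `M` in
operator norm: the quantitative form of unconditional summability in the strong operator
topology. -/
def PartialSumsBoundedBy (T : ι → E →L[𝕜] E) (M : ℝ) : Prop :=
  ∀ F : Finset ι, ‖∑ j ∈ F, T j‖ ≤ M

theorem exists_partialSumsBoundedBy [CompleteSpace E] {T : ι → E →L[𝕜] E}
    (hsum : ∀ f, Summable fun j => T j f) : ∃ M, PartialSumsBoundedBy T M := by
  classical
  refine banach_steinhaus (g := fun F : Finset ι => ∑ j ∈ F, T j) fun f => ?_
  obtain ⟨s, hs⟩ := summable_iff_vanishing_norm.1 (hsum f) 1 one_pos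
  refine ⟨∑ j ∈ s, ‖T j f‖ + 1, fun F => ?_⟩
  rw [sum_apply, ← Finset.sum_inter_add_sum_sdiff F s]
  refine norm_add_le_of_le ((norm_sum_le _ _).trans ?_) (hs _ Finset.sdiff_disjoint).le
  exact Finset.sum_le_sum_of_subset_of_nonneg Finset.inter_subset_right fun _ _ _ => norm_nonneg _

theorem norm_mul_le_of_hasSum {S : ι → E →L[𝕜] E} {T : κ → E →L[𝕜] E} {U V : E →L[𝕜] E} {B : ℝ}
    (hU : ∀ f, HasSum (fun a => S a f) (U f)) (hV : ∀ f, HasSum (fun b => T b f) (V f))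
    (hB : ∀ F G, ∑ a ∈ F, ∑ b ∈ G, ‖S a * T b‖ ≤ B) : ‖U * V‖ ≤ B := by
  refine opNorm_le_bound _ (by simpa using hB ∅ ∅) fun f => ?_
  refine le_of_tendsto (hU (V f)).norm (Eventually.of_forall fun F => ?_)
  refine le_of_tendsto (tendsto_finsetSum F fun a _ => (S a).hasSum (hV f)).norm
    (Eventually.of_forall fun G => ?_)
  calc ‖∑ a ∈ F, ∑ b ∈ G, S a (T b f)‖ = ‖(∑ a ∈ F, ∑ b ∈ G, S a * T b) f‖ := by
        simp only [sum_apply, mul_apply_eq_comp]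
    _ ≤ B * ‖f‖ := le_of_opNorm_le _
        ((norm_sum_le_of_le F fun a _ => norm_sum_le G fun b => S a * T b).trans (hB F G)) f

/-- `U` regroups the family `T` along `φ`: each `U j` is the sum, in the strong operator topology,
of the `T k` with `φ k = j`. -/
def IsFiberwiseSum (φ : ι → κ) (T : ι → E →L[𝕜] E) (U : κ → E →L[𝕜] E) : Prop :=
  ∀ j f, HasSum (fun k : {k // φ k = j} => T k f) (U j f)

namespace PartialSumsBoundedBy

variable {T : ι → E →L[𝕜] E} {M : ℝ}

theorem nonneg (hT : PartialSumsBoundedBy T M) : 0 ≤ M :=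
  (norm_nonneg _).trans (hT ∅)

theorem norm_le (hT : PartialSumsBoundedBy T M) (j : ι) : ‖T j‖ ≤ M := by
  simpa using hT {j}

theorem norm_sum_apply_le (hT : PartialSumsBoundedBy T M) (F : Finset ι) (f : E) :
    ‖∑ j ∈ F, T j f‖ ≤ M * ‖f‖ := by
  simpa only [sum_apply] using le_of_opNorm_le _ (hT F) f

theorem comp_embedding (hT : PartialSumsBoundedBy T M) (e : κ ↪ ι) :
    PartialSumsBoundedBy (fun k => T (e k)) M := fun F => by
  simpa only [Finset.sum_map] using hT (F.map e)

theorem norm_le_of_hasSum {U : E →L[𝕜] E} (hT : PartialSumsBoundedBy T M)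
    (hU : ∀ f, HasSum (fun j => T j f) (U f)) : ‖U‖ ≤ M :=
  opNorm_le_bound _ hT.nonneg fun f =>
    le_of_tendsto (hU f).norm (Eventually.of_forall fun F => hT.norm_sum_apply_le F f)

theorem exists_hasSum_apply (hT : PartialSumsBoundedBy T M)
    (hsum : ∀ f, Summable fun j => T j f) :
    ∃ U : E →L[𝕜] E, ∀ f, HasSum (fun j => T j f) (U f) := by
  let U : E →ₗ[𝕜] E :=
    { toFun f := ∑' j, T j f
      map_add' f g := by simpa only [map_add] using (hsum f).tsum_add (hsum g)
      map_smul' c f := by simpa only [map_smul, RingHom.id_apply] using (hsum f).tsum_const_smul c }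
  exact ⟨U.mkContinuous M fun f => le_of_tendsto (hsum f).hasSum.norm
    (Eventually.of_forall fun F => hT.norm_sum_apply_le F f), fun f => (hsum f).hasSum⟩

theorem exists_isFiberwiseSum [CompleteSpace E] (hT : PartialSumsBoundedBy T M)
    (hsum : ∀ f, Summable fun j => T j f) (φ : ι → κ) : ∃ U, IsFiberwiseSum φ T U := by
  have fiber_sum (j : κ) :=
    (hT.comp_embedding (Function.Embedding.subtype (φ · = j))).exists_hasSum_apply
      fun f => (hsum f).subtype _
  choose U hU using fiber_sum
  exact ⟨U, hU⟩

end PartialSumsBoundedBy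

namespace IsFiberwiseSum

variable {φ : ι → κ} {T : ι → E →L[𝕜] E} {U : κ → E →L[𝕜] E}

theorem hasSum (hU : IsFiberwiseSum φ T U) {f g : E} (hg : HasSum (fun k => T k f) g) :
    HasSum (fun j => U j f) g :=
  ((Equiv.sigmaFiberEquiv φ).hasSum_iff.2 hg).sigma fun j => hU j f

theorem hasSum_finset (hU : IsFiberwiseSum φ T U) (F : Finset κ) (f : E) :
    HasSum (fun k : {k // φ k ∈ F} => T k f) ((∑ j ∈ F, U j) f) := by
  classical
  have fibers : ∀ j ∈ F, HasSum ((φ ⁻¹' {j}).indicator fun k => T k f) (U j f) :=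
    fun j _ => hasSum_subtype_iff_indicator.1 (hU j f)
  rw [sum_apply]
  refine (hasSum_subtype_iff_indicator (f := fun k => T k f) (s := {k | φ k ∈ F})).2
    ((hasSum_sum fibers).congr_fun fun k => ?_)
  simp [Set.indicator_apply]

theorem partialSumsBoundedBy {M : ℝ} (hU : IsFiberwiseSum φ T U) (hT : PartialSumsBoundedBy T M) :
    PartialSumsBoundedBy U M := fun F =>
  (hT.comp_embedding (Function.Embedding.subtype (φ · ∈ F))).norm_le_of_hasSum (hU.hasSum_finset F)

theorem eq_zero (hU : IsFiberwiseSum φ T U) {j : κ} (hj : ∀ k, φ k ≠ j) : U j = 0 := by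
  have : IsEmpty {k // φ k = j} := ⟨fun k => hj k k.2⟩
  ext f
  exact (hU j f).unique hasSum_empty

theorem eq_of_unique (hU : IsFiberwiseSum φ T U) {j : κ} {i : ι} (hi : ∀ k, φ k = j ↔ k = i) :
    U j = T i := by
  let _ : Unique {k // φ k = j} := ⟨⟨i, (hi i).2 rfl⟩, fun k => Subtype.ext ((hi k).1 k.2)⟩
  ext f
  exact (hU j f).unique (hasSum_unique (fun k : {k // φ k = j} => T k f))

end IsFiberwiseSum

end PartialSums

section SquareFunction

-- Choose the signs one at a time; by the parallelogram law one of the two choices suffices.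
theorem exists_subset_sum_norm_sq_le_norm_sum_sub_sum_sdiff_sq {ι E : Type*} [DecidableEq ι]
    [NormedAddCommGroup E] [InnerProductSpace ℝ E] (x : ι → E) (F : Finset ι) :
    ∃ A ⊆ F, ∑ j ∈ F, ‖x j‖ ^ 2 ≤ ‖∑ j ∈ A, x j - ∑ j ∈ F \ A, x j‖ ^ 2 := by
  induction F using Finset.induction with
  | empty => exact ⟨∅, subset_rfl, by simp⟩
  | insert a F ha ih =>
    obtain ⟨A, hAF, hA⟩ := ih
    have haA : a ∉ A := fun h => ha (hAF h)
    have parallelogram := parallelogram_law_with_norm ℝ (∑ j ∈ A, x j - ∑ j ∈ F \ A, x j) (x a)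
    rw [Finset.sum_insert ha]
    by_cases hplus : ‖∑ j ∈ A, x j - ∑ j ∈ F \ A, x j‖ ^ 2 + ‖x a‖ ^ 2 ≤
        ‖∑ j ∈ A, x j - ∑ j ∈ F \ A, x j + x a‖ ^ 2
    · refine ⟨insert a A, Finset.insert_subset_insert a hAF, ?_⟩
      rw [Finset.sum_insert haA, Finset.insert_sdiff_insert, Finset.sdiff_insert_of_notMem ha,
        add_sub_assoc, add_comm (x a)]
      linarith
    · refine ⟨A, hAF.trans (Finset.subset_insert a F), ?_⟩
      rw [Finset.insert_sdiff_of_notMem F haA,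
        Finset.sum_insert fun h => ha (Finset.mem_sdiff.1 h).1, add_comm (x a), ← sub_sub]
      nlinarith

variable {𝕜 H ι : Type*} [RCLike 𝕜] [NormedAddCommGroup H] [InnerProductSpace 𝕜 H]

namespace PartialSumsBoundedBy

variable {T : ι → H →L[𝕜] H} {M : ℝ}

theorem sum_norm_sq_le (hT : PartialSumsBoundedBy T M) (F : Finset ι) (f : H) :
    ∑ j ∈ F, ‖T j f‖ ^ 2 ≤ (2 * M * ‖f‖) ^ 2 := by
  classical
  let _ : InnerProductSpace ℝ H := InnerProductSpace.rclikeToReal 𝕜 H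
  obtain ⟨A, -, hA⟩ :=
    exists_subset_sum_norm_sq_le_norm_sum_sub_sum_sdiff_sq (fun j => T j f) F
  calc ∑ j ∈ F, ‖T j f‖ ^ 2 ≤ ‖∑ j ∈ A, T j f - ∑ j ∈ F \ A, T j f‖ ^ 2 := hA
    _ ≤ (M * ‖f‖ + M * ‖f‖) ^ 2 := by
      gcongr
      exact norm_sub_le_of_le (hT.norm_sum_apply_le A f) (hT.norm_sum_apply_le (F \ A) f)
    _ = (2 * M * ‖f‖) ^ 2 := by ring

/-- The analysis operator `f ↦ (T j f)_j` into `ℓ²(ι, H)`. -/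
noncomputable def analysis (hT : PartialSumsBoundedBy T M) :
    H →L[𝕜] lp (fun _ : ι => H) 2 :=
  LinearMap.mkContinuous
    { toFun f := ⟨fun j => T j f, memℓp_gen' (C := (2 * M * ‖f‖) ^ 2) fun F => by
        simpa using hT.sum_norm_sq_le F f⟩
      map_add' f g := lp.ext <| funext fun j => map_add (T j) f g
      map_smul' c f := lp.ext <| funext fun j => map_smul (T j) c f }
    (2 * M) fun f => lp.norm_le_of_forall_sum_le (by simp)
      (mul_nonneg (mul_nonneg zero_le_two hT.nonneg) (norm_nonneg f)) fun F => by
        simpa using hT.sum_norm_sq_le F f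

@[simp]
theorem analysis_apply (hT : PartialSumsBoundedBy T M) (f : H) (j : ι) :
    hT.analysis f j = T j f := rfl

theorem norm_analysis_le (hT : PartialSumsBoundedBy T M) : ‖hT.analysis‖ ≤ 2 * M :=
  LinearMap.mkContinuous_norm_le _ (mul_nonneg zero_le_two hT.nonneg) _

variable [CompleteSpace H]

theorem adjoint (hT : PartialSumsBoundedBy T M) :
    PartialSumsBoundedBy (fun j => ContinuousLinearMap.adjoint (T j)) M := fun F => by
  rw [← map_sum, LinearIsometryEquiv.norm_map]
  exact hT F

/-- The synthesis operator `x ↦ ∑ j, T j (x j)` on `ℓ²(ι, H)`, obtained by duality from the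
analysis operator of the adjoint family. -/
noncomputable def synthesis (hT : PartialSumsBoundedBy T M) :
    lp (fun _ : ι => H) 2 →L[𝕜] H :=
  ContinuousLinearMap.adjoint hT.adjoint.analysis

theorem norm_synthesis_le (hT : PartialSumsBoundedBy T M) : ‖hT.synthesis‖ ≤ 2 * M := by
  rw [synthesis, LinearIsometryEquiv.norm_map]
  exact hT.adjoint.norm_analysis_le

theorem synthesis_single [DecidableEq ι] (hT : PartialSumsBoundedBy T M) (j : ι) (v : H) :
    hT.synthesis (lp.single 2 j v) = T j v :=
  ext_inner_right 𝕜 fun g => by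
    rw [synthesis, adjoint_inner_left, lp.inner_single_left, analysis_apply,
      adjoint_inner_right]

theorem hasSum_synthesis (hT : PartialSumsBoundedBy T M) (x : lp (fun _ : ι => H) 2) :
    HasSum (fun j => T j (x j)) (hT.synthesis x) := by
  classical
  simpa only [Function.comp_def, synthesis_single] using
    hT.synthesis.hasSum (lp.hasSum_single (by simp) x)

protected theorem mul {A B : ι → H →L[𝕜] H} {a b : ℝ} (hA : PartialSumsBoundedBy A a)
    (hB : PartialSumsBoundedBy B b) :
    PartialSumsBoundedBy (fun j => A j * B j) (2 * a * (2 * b)) := fun F => by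
  have hA' := hA.comp_embedding (Function.Embedding.subtype (· ∈ F))
  have hB' := hB.comp_embedding (Function.Embedding.subtype (· ∈ F))
  have factorization : ∑ j ∈ F, A j * B j = hA'.synthesis ∘L hB'.analysis := by
    ext f
    rw [← Finset.sum_coe_sort]
    simpa [sum_apply] using
      (hasSum_fintype fun j : F => A j (B j f)).unique (hA'.hasSum_synthesis (hB'.analysis f))
  rw [factorization]
  exact (opNorm_comp_le _ _).trans <| mul_le_mul hA'.norm_synthesis_le hB'.norm_analysis_le
    (norm_nonneg _) (mul_nonneg zero_le_two hA.nonneg)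

end PartialSumsBoundedBy

end SquareFunction

section SchurTest

theorem sum_sq_sum_mul_le_of_schur {ι κ : Type*} {k : ι → κ → ℝ} {B : ℝ} (F : Finset ι)
    (G : Finset κ) (hk : ∀ i c, 0 ≤ k i c) (row : ∀ i, ∑ c ∈ G, k i c ≤ B)
    (column : ∀ c, ∑ i ∈ F, k i c ≤ B) (hB : 0 ≤ B) (u : κ → ℝ) :
    ∑ i ∈ F, (∑ c ∈ G, k i c * u c) ^ 2 ≤ B ^ 2 * ∑ c ∈ G, u c ^ 2 := by
  calc ∑ i ∈ F, (∑ c ∈ G, k i c * u c) ^ 2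
      ≤ ∑ i ∈ F, B * ∑ c ∈ G, k i c * u c ^ 2 := by
        refine Finset.sum_le_sum fun i _ => ?_
        have weighted_nonneg : ∀ c ∈ G, 0 ≤ k i c * u c ^ 2 :=
          fun c _ => mul_nonneg (hk i c) (sq_nonneg _)
        refine (Finset.sum_sq_le_sum_mul_sum_of_sq_le_mul G (fun c _ => hk i c)
          weighted_nonneg fun c _ => le_of_eq (by ring)).trans ?_
        exact mul_le_mul_of_nonneg_right (row i) (Finset.sum_nonneg weighted_nonneg)
    _ = B * ∑ c ∈ G, (∑ i ∈ F, k i c) * u c ^ 2 := by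
        rw [← Finset.mul_sum, Finset.sum_comm]
        simp_rw [Finset.sum_mul]
    _ ≤ B * ∑ c ∈ G, B * u c ^ 2 := by
        gcongr with c
        exact column c
    _ = B ^ 2 * ∑ c ∈ G, u c ^ 2 := by rw [← Finset.mul_sum]; ring

variable {𝕜 H ι κ : Type*} [RCLike 𝕜] [NormedAddCommGroup H] [InnerProductSpace 𝕜 H]
  [CompleteSpace H]

theorem PartialSumsBoundedBy.norm_analysis_comp_comp_synthesis_le_of_schur
    {A : ι → H →L[𝕜] H} {B : κ → H →L[𝕜] H} {a b C : ℝ} {k : ι → κ → ℝ}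
    (hA : PartialSumsBoundedBy A a) (hB : PartialSumsBoundedBy B b) (X : H →L[𝕜] H)
    (hk : ∀ i c, ‖A i * X * B c‖ ≤ k i c) (row : ∀ i (G : Finset κ), ∑ c ∈ G, k i c ≤ C)
    (column : ∀ c (F : Finset ι), ∑ i ∈ F, k i c ≤ C) (hC : 0 ≤ C) :
    ‖hA.analysis ∘L X ∘L hB.synthesis‖ ≤ C := by
  refine opNorm_le_bound _ hC fun x => ?_
  refine lp.norm_le_of_forall_sum_le (by simp) (mul_nonneg hC (norm_nonneg x)) fun F => ?_
  simp only [ENNReal.toReal_ofNat, Real.rpow_ofNat, comp_apply, PartialSumsBoundedBy.analysis_apply]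
  have entries (i : ι) : HasSum (fun c => A i (X (B c (x c)))) (A i (X (hB.synthesis x))) :=
    (A i ∘L X).hasSum (hB.hasSum_synthesis x)
  refine le_of_tendsto (tendsto_finsetSum F fun i _ => (entries i).norm.pow 2)
    (Eventually.of_forall fun G => ?_)
  calc ∑ i ∈ F, ‖∑ c ∈ G, A i (X (B c (x c)))‖ ^ 2
      ≤ ∑ i ∈ F, (∑ c ∈ G, k i c * ‖x c‖) ^ 2 := by
        gcongr with i
        exact norm_sum_le_of_le _ fun c _ => le_of_opNorm_le _ (hk i c) (x c)
    _ ≤ C ^ 2 * ∑ c ∈ G, ‖x c‖ ^ 2 :=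
        sum_sq_sum_mul_le_of_schur F G (fun i c => (norm_nonneg _).trans (hk i c))
          (fun i => row i G) (fun c => column c F) hC _
    _ ≤ C ^ 2 * ‖x‖ ^ 2 := by
        gcongr
        simpa using lp.sum_rpow_le_norm_rpow (by simp) x G
    _ = (C * ‖x‖) ^ 2 := by ring

end SchurTest

section AlmostOrthogonality

theorem summable_pow_natAbs {q : ℝ} (hq₀ : 0 ≤ q) (hq₁ : q < 1) :
    Summable fun i : ℤ => q ^ i.natAbs :=
  .of_nat_of_neg (by simpa using summable_geometric_of_lt_one hq₀ hq₁)
    (by simpa using summable_geometric_of_lt_one hq₀ hq₁)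

theorem sum_pow_natAbs_sub_le_tsum {q : ℝ} (hq₀ : 0 ≤ q) (hq₁ : q < 1) (F : Finset ℤ) (x : ℤ) :
    ∑ i ∈ F, q ^ (i - x).natAbs ≤ ∑' i : ℤ, q ^ i.natAbs := by
  simpa using ((summable_pow_natAbs hq₀ hq₁).sum_le_tsum (F.map (Equiv.subRight x).toEmbedding)
    fun _ _ => pow_nonneg hq₀ _)

theorem sum_pow_natAbs_sub_le_tsum' {q : ℝ} (hq₀ : 0 ≤ q) (hq₁ : q < 1) (F : Finset ℤ) (x : ℤ) :
    ∑ i ∈ F, q ^ (x - i).natAbs ≤ ∑' i : ℤ, q ^ i.natAbs := by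
  simpa only [← Int.natAbs_neg (x - _), neg_sub] using sum_pow_natAbs_sub_le_tsum hq₀ hq₁ F x

theorem sq_pow_le_sq_pow_mul_pow_mul_pow {q : ℝ} (hq₀ : 0 ≤ q) (hq₁ : q ≤ 1) {x y z n : ℕ}
    (h : x + y + z ≤ n) : (q ^ n) ^ 2 ≤ (q ^ x) ^ 2 * (q ^ y * q ^ z) := by
  have sq_le (m : ℕ) : (q ^ m) ^ 2 ≤ q ^ m :=
    pow_le_of_le_one (pow_nonneg hq₀ m) (pow_le_one₀ hq₀ hq₁) two_ne_zero
  calc (q ^ n) ^ 2 ≤ (q ^ (x + y + z)) ^ 2 := by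
        gcongr ?_ ^ 2
        exact pow_le_pow_of_le_one hq₀ hq₁ h
    _ = (q ^ x) ^ 2 * ((q ^ y) ^ 2 * (q ^ z) ^ 2) := by ring
    _ ≤ _ := by
        gcongr
        exacts [sq_le y, sq_le z]

theorem sum_sum_mul_le_mul {ι κ : Type*} {x : ι → ℝ} {y : ι → κ → ℝ} {A B : ℝ} (F : Finset ι)
    (G : Finset κ) (hx : ∀ j, 0 ≤ x j) (hxA : ∑ j ∈ F, x j ≤ A) (hyB : ∀ j, ∑ c ∈ G, y j c ≤ B)
    (hB : 0 ≤ B) : ∑ c ∈ G, ∑ j ∈ F, x j * y j c ≤ A * B := by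
  calc ∑ c ∈ G, ∑ j ∈ F, x j * y j c = ∑ j ∈ F, x j * ∑ c ∈ G, y j c := by
        rw [Finset.sum_comm]
        simp_rw [Finset.mul_sum]
    _ ≤ ∑ j ∈ F, x j * B := by
        gcongr with j
        exacts [hx j, hyB j]
    _ ≤ A * B := by
        rw [← Finset.sum_mul]
        gcongr

theorem norm_le_four_mul_norm_mul_mul {R : Type*} [SeminormedRing R] {v : R}
    (hv : ‖1 - v‖ ≤ 1 / 2) (x : R) : ‖x‖ ≤ 4 * ‖v * x * v‖ := by
  have left_factor (y : R) : ‖y‖ ≤ 2 * ‖v * y‖ := by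
    have := norm_add_le (v * y) ((1 - v) * y)
    rw [sub_mul, one_mul, add_sub_cancel, ← one_sub_mul] at this
    nlinarith [norm_mul_le (1 - v) y, norm_nonneg y]
  have right_factor (y : R) : ‖y‖ ≤ 2 * ‖y * v‖ := by
    have := norm_add_le (y * v) (y * (1 - v))
    rw [mul_sub, mul_one, add_sub_cancel, ← mul_one_sub] at this
    nlinarith [norm_mul_le y (1 - v), norm_nonneg y]
  linarith [left_factor x, right_factor (v * x)]

section NormedSpace

variable {𝕜 E : Type*} [NontriviallyNormedField 𝕜] [NormedAddCommGroup E] [NormedSpace 𝕜 E]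

/-- The products `T j * T k` decay geometrically at rate `q ^ 2` in `|j - k|`. Writing the rate as
a square lets `q` be the rate that survives after taking geometric means of two such bounds. -/
def AlmostOrthogonal (T : ℤ → E →L[𝕜] E) (D q : ℝ) : Prop :=
  ∀ j k, ‖T j * T k‖ ≤ D * (q ^ (j - k).natAbs) ^ 2

namespace AlmostOrthogonal

variable {T : ℤ → E →L[𝕜] E} {D q M : ℝ}

theorem nonneg (hT : AlmostOrthogonal T D q) : 0 ≤ D := by
  simpa using (norm_nonneg _).trans (hT 0 0)

-- The product is small both when `|a - i| + |j - b|` is large and when `|i - j|` is large; this is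
-- the geometric mean of the two bounds.
theorem norm_mul_mul_mul_le (hT : AlmostOrthogonal T D q) (hq : 0 ≤ q) (hM : ∀ j, ‖T j‖ ≤ M)
    (hMD : M ^ 2 ≤ D) (a i j b : ℤ) :
    ‖T a * (T i * T j) * T b‖ ≤
      D ^ 2 * q ^ (a - i).natAbs * q ^ (j - b).natAbs * q ^ (i - j).natAbs := by
  have hD := hT.nonneg
  have : 0 ≤ M := (norm_nonneg _).trans (hM 0)
  have outer : ‖T a * (T i * T j) * T b‖ ≤
      D ^ 2 * (q ^ (a - i).natAbs * q ^ (j - b).natAbs) ^ 2 := by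
    calc ‖T a * (T i * T j) * T b‖ = ‖T a * T i * (T j * T b)‖ := by simp only [mul_assoc]
      _ ≤ D * (q ^ (a - i).natAbs) ^ 2 * (D * (q ^ (j - b).natAbs) ^ 2) :=
        norm_mul_le_of_le (hT a i) (hT j b)
      _ = _ := by ring
  have inner : ‖T a * (T i * T j) * T b‖ ≤ D ^ 2 * (q ^ (i - j).natAbs) ^ 2 := by
    calc ‖T a * (T i * T j) * T b‖
        ≤ M * (D * (q ^ (i - j).natAbs) ^ 2) * M :=
          norm_mul_le_of_le (norm_mul_le_of_le (hM a) (hT i j)) (hM b)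
      _ = M ^ 2 * (D * (q ^ (i - j).natAbs) ^ 2) := by ring
      _ ≤ D * (D * (q ^ (i - j).natAbs) ^ 2) := by gcongr
      _ = _ := by ring
  refine abs_le_of_sq_le_sq' ?_ (by positivity) |>.2
  calc ‖T a * (T i * T j) * T b‖ ^ 2
      = ‖T a * (T i * T j) * T b‖ * ‖T a * (T i * T j) * T b‖ := sq _
    _ ≤ D ^ 2 * (q ^ (a - i).natAbs * q ^ (j - b).natAbs) ^ 2 *
        (D ^ 2 * (q ^ (i - j).natAbs) ^ 2) := by gcongr
    _ = _ := by ring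

-- Off the diagonal the decay in `|a - b|` splits between `|j - k|` and the distances of `a`, `b` to
-- `j`, `k`; the latter factors are summed over the fibres.
theorem of_isFiberwiseSum {U : ℤ → E →L[𝕜] E} {φ : ℤ → ℤ} (hT : AlmostOrthogonal T D q)
    (hq₀ : 0 ≤ q) (hq₁ : q < 1) (hM : PartialSumsBoundedBy T M) (hU : IsFiberwiseSum φ T U)
    (hφ : ∀ a b, φ a ≠ φ b →
      (φ a - φ b).natAbs + (a - φ a).natAbs + (b - φ b).natAbs ≤ (a - b).natAbs) :
    AlmostOrthogonal U (M ^ 2 + D * (∑' i : ℤ, q ^ i.natAbs) ^ 2) q := fun j k => by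
  set S := ∑' i : ℤ, q ^ i.natAbs
  have hD := hT.nonneg
  have hUM := (hU.partialSumsBoundedBy hM).norm_le
  rcases eq_or_ne j k with rfl | hjk
  · calc ‖U j * U j‖ ≤ M * M := norm_mul_le_of_le (hUM j) (hUM j)
      _ ≤ M ^ 2 + D * S ^ 2 := by rw [sq M]; exact le_add_of_nonneg_right (by positivity)
      _ = _ := by simp
  have weight_le (a : {a // φ a = j}) (b : {b // φ b = k}) : ‖T a * T b‖ ≤
      D * (q ^ (j - k).natAbs) ^ 2 * (q ^ (a - j : ℤ).natAbs * q ^ (b - k : ℤ).natAbs) := by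
    have distance_le := hφ a b (a.2.symm ▸ b.2.symm ▸ hjk)
    rw [a.2, b.2] at distance_le
    calc ‖T a * T b‖ ≤ D * (q ^ (a - b : ℤ).natAbs) ^ 2 := hT a b
      _ ≤ D * ((q ^ (j - k).natAbs) ^ 2 * (q ^ (a - j : ℤ).natAbs * q ^ (b - k : ℤ).natAbs)) := by
        gcongr
        exact sq_pow_le_sq_pow_mul_pow_mul_pow hq₀ hq₁.le distance_le
      _ = _ := by ring
  have fiber_weight_le (i : ℤ) (F : Finset {a // φ a = i}) :
      ∑ a ∈ F, q ^ (a - i : ℤ).natAbs ≤ S := by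
    simpa only [Finset.sum_map, Function.Embedding.coe_subtype] using
      sum_pow_natAbs_sub_le_tsum hq₀ hq₁ (F.map (Function.Embedding.subtype _)) i
  have offDiagonal : ‖U j * U k‖ ≤ D * (q ^ (j - k).natAbs) ^ 2 * (S * S) :=
    norm_mul_le_of_hasSum (hU j) (hU k) fun F G => by
      calc ∑ a ∈ F, ∑ b ∈ G, ‖T a * T b‖
          ≤ ∑ a ∈ F, ∑ b ∈ G, D * (q ^ (j - k).natAbs) ^ 2 *
              (q ^ (a - j : ℤ).natAbs * q ^ (b - k : ℤ).natAbs) := by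
            gcongr with a _ b _
            exact weight_le a b
        _ = D * (q ^ (j - k).natAbs) ^ 2 *
              ((∑ a ∈ F, q ^ (a - j : ℤ).natAbs) * ∑ b ∈ G, q ^ (b - k : ℤ).natAbs) := by
            simp_rw [Finset.sum_mul_sum, Finset.mul_sum]
        _ ≤ D * (q ^ (j - k).natAbs) ^ 2 * (S * S) := by
            gcongr
            exacts [fiber_weight_le j F, fiber_weight_le k G]
  nlinarith [mul_nonneg (sq_nonneg M) (sq_nonneg (q ^ (j - k).natAbs))]

end AlmostOrthogonal

end NormedSpace

variable {𝕜 H : Type*} [RCLike 𝕜] [NormedAddCommGroup H] [InnerProductSpace 𝕜 H]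
  [CompleteSpace H] {T : ℤ → H →L[𝕜] H} {D q M : ℝ}

theorem AlmostOrthogonal.norm_analysis_comp_sum_comp_synthesis_le (hT : AlmostOrthogonal T D q)
    (hq₀ : 0 ≤ q) (hq₁ : q < 1) (hM : PartialSumsBoundedBy T M) (hMD : M ^ 2 ≤ D) (m l : ℤ)
    (F : Finset ℤ) :
    ‖(hM.comp_embedding (addRightEmbedding m)).analysis ∘L (∑ j ∈ F, T j * T (j + l)) ∘L
      hM.synthesis‖ ≤ (D * ∑' i : ℤ, q ^ i.natAbs) ^ 2 * q ^ l.natAbs := by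
  set S := ∑' i : ℤ, q ^ i.natAbs
  have hS : 0 ≤ S := tsum_nonneg fun i => pow_nonneg hq₀ _
  let u (a j : ℤ) : ℝ := q ^ (a + m - j).natAbs
  let v (j b : ℤ) : ℝ := q ^ (j + l - b).natAbs
  have : 0 ≤ D ^ 2 * q ^ l.natAbs := by positivity
  rw [show (D * S) ^ 2 * q ^ l.natAbs = D ^ 2 * q ^ l.natAbs * (S * S) by ring]
  refine (hM.comp_embedding _).norm_analysis_comp_comp_synthesis_le_of_schur hM _
    (k := fun a b => D ^ 2 * q ^ l.natAbs * ∑ j ∈ F, u a j * v j b) (fun a b => ?_)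
    (fun a G => ?_) (fun b G => ?_) (by positivity)
  · rw [Finset.mul_sum F, Finset.sum_mul, Finset.mul_sum]
    refine norm_sum_le_of_le F fun j _ => ?_
    refine (hT.norm_mul_mul_mul_le hq₀ hM.norm_le hMD (a + m) j (j + l) b).trans_eq ?_
    rw [sub_add_cancel_left, Int.natAbs_neg]
    ring
  · rw [← Finset.mul_sum]
    gcongr
    exact sum_sum_mul_le_mul F G (fun j => pow_nonneg hq₀ _)
      (sum_pow_natAbs_sub_le_tsum' hq₀ hq₁ F _)
      (fun j => sum_pow_natAbs_sub_le_tsum' hq₀ hq₁ G _) hS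
  · rw [← Finset.mul_sum]
    gcongr
    simp_rw [mul_comm (u _ _)]
    refine sum_sum_mul_le_mul F G (fun j => pow_nonneg hq₀ _) ?_ (fun j => ?_) hS
    · simpa only [v, sub_sub_eq_add_sub] using sum_pow_natAbs_sub_le_tsum hq₀ hq₁ F (b - l)
    · simpa only [u, sub_sub_eq_add_sub] using sum_pow_natAbs_sub_le_tsum hq₀ hq₁ G (j - m)

end AlmostOrthogonality

section DiagonalSums

variable {𝕜 H : Type*} [RCLike 𝕜] [NormedAddCommGroup H] [InnerProductSpace 𝕜 H]
  [CompleteSpace H] {T : ℤ → H →L[𝕜] H} {M : ℝ}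

namespace PartialSumsBoundedBy

/-- The `l`-th diagonal `∑ j, T j * T (j + l)` of the matrix `(T j * T k)`, a strongly convergent
series. -/
noncomputable def diagonal (hM : PartialSumsBoundedBy T M) (l : ℤ) : H →L[𝕜] H :=
  hM.synthesis ∘L (hM.comp_embedding (addRightEmbedding l)).analysis

/-- The sum of the diagonals at distance at most `N` from the main one: the operator `𝒱_N`. -/
noncomputable def band (hM : PartialSumsBoundedBy T M) (N : ℕ) : H →L[𝕜] H :=
  ∑ l ∈ Finset.Icc (-(N : ℤ)) N, hM.diagonal l

theorem hasSum_diagonal (hM : PartialSumsBoundedBy T M) (l : ℤ) (f : H) :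
    HasSum (fun j => T j (T (j + l) f)) (hM.diagonal l f) :=
  hM.hasSum_synthesis _

theorem mul_shift (hM : PartialSumsBoundedBy T M) (l : ℤ) :
    PartialSumsBoundedBy (fun j => T j * T (j + l)) ((2 * M) ^ 2) := by
  simpa only [sq, addRightEmbedding_apply] using hM.mul (hM.comp_embedding (addRightEmbedding l))

theorem norm_diagonal_le {l : ℤ} {B : ℝ} (hM : PartialSumsBoundedBy T M)
    (hB : PartialSumsBoundedBy (fun j => T j * T (j + l)) B) : ‖hM.diagonal l‖ ≤ B :=
  hB.norm_le_of_hasSum (hM.hasSum_diagonal l)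

theorem tendsto_band (hM : PartialSumsBoundedBy T M) (hone : HasSum hM.diagonal 1) :
    Tendsto hM.band atTop (𝓝 1) :=
  hone.comp Finset.tendsto_Icc_neg

theorem tendsto_norm_one_sub_band (hM : PartialSumsBoundedBy T M) (hone : HasSum hM.diagonal 1) :
    Tendsto (fun N => ‖1 - hM.band N‖) atTop (𝓝 0) := by
  simpa only [norm_sub_rev] using tendsto_iff_norm_sub_tendsto_zero.1 (hM.tendsto_band hone)

theorem norm_one_sub_band_le {c : ℤ → ℝ} (hM : PartialSumsBoundedBy T M)
    (hone : HasSum hM.diagonal 1) (hc : Summable c) (N : ℕ)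
    (hdiag : ∀ l, N < l.natAbs → ‖hM.diagonal l‖ ≤ c l) :
    ‖1 - hM.band N‖ ≤ ∑' l : {l // l ∉ Finset.Icc (-(N : ℤ)) N}, c l := by
  have tail : HasSum (fun l : {l // l ∉ Finset.Icc (-(N : ℤ)) N} => hM.diagonal l)
      (1 - hM.band N) :=
    (Finset.hasSum_compl_iff _).2 (by rwa [band, sub_add_cancel])
  rw [← tail.tsum_eq]
  refine tsum_of_norm_bounded (hc.subtype _).hasSum fun l => hdiag l ?_
  have := l.2
  rw [Finset.mem_Icc] at this
  omega

end PartialSumsBoundedBy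

theorem tendsto_tsum_notMem_Icc {c : ℤ → ℝ} :
    Tendsto (fun N : ℕ => ∑' l : {l // l ∉ Finset.Icc (-(N : ℤ)) N}, c l) atTop (𝓝 0) :=
  (tendsto_tsum_compl_atTop_zero c).comp Finset.tendsto_Icc_neg

namespace AlmostOrthogonal

variable {D q : ℝ}

-- With `P` and `Q` the analysis and synthesis operators, `P X Q` is small and `band N` has the form
-- `Q P'`; so `band N * X * band N` is small, and an almost invertible `band N` can be removed.
theorem partialSumsBoundedBy_mul_shift_of_band (hT : AlmostOrthogonal T D q)
    (hq₀ : 0 ≤ q) (hq₁ : q < 1) (hM : PartialSumsBoundedBy T M) (hMD : M ^ 2 ≤ D) {N : ℕ}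
    (hN : ‖1 - hM.band N‖ ≤ 1 / 2) (l : ℤ) :
    PartialSumsBoundedBy (fun j => T j * T (j + l))
      (4 * ((2 * N + 1) * (2 * M) * (D * ∑' i : ℤ, q ^ i.natAbs)) ^ 2 * q ^ l.natAbs) := by
  intro F
  set X := ∑ j ∈ F, T j * T (j + l)
  set S := ∑' i : ℤ, q ^ i.natAbs
  have hM₀ := hM.nonneg
  let P : H →L[𝕜] lp (fun _ : ℤ => H) 2 :=
    ∑ m ∈ Finset.Icc (-(N : ℤ)) N, (hM.comp_embedding (addRightEmbedding m)).analysis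
  have card_Icc : ((Finset.Icc (-(N : ℤ)) N).card : ℝ) = 2 * N + 1 := by
    rw [Int.card_Icc, show ((N : ℤ) + 1 - -N).toNat = 2 * N + 1 by omega]
    push_cast
    rfl
  have band_eq : hM.band N = hM.synthesis ∘L P := by
    simp only [P, comp_finsetSum, PartialSumsBoundedBy.band, PartialSumsBoundedBy.diagonal]
  have norm_P_le : ‖P‖ ≤ (2 * N + 1) * (2 * M) := by
    refine (norm_sum_le_of_le _ fun m _ =>
      (hM.comp_embedding (addRightEmbedding m)).norm_analysis_le).trans_eq ?_
    rw [Finset.sum_const, nsmul_eq_mul, card_Icc]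
  have norm_sandwich_le :
      ‖P ∘L X ∘L hM.synthesis‖ ≤ (2 * N + 1) * ((D * S) ^ 2 * q ^ l.natAbs) := by
    rw [finsetSum_comp]
    refine (norm_sum_le_of_le _ fun m _ =>
      hT.norm_analysis_comp_sum_comp_synthesis_le hq₀ hq₁ hM hMD m l F).trans_eq ?_
    rw [Finset.sum_const, nsmul_eq_mul, card_Icc]
  calc ‖X‖ ≤ 4 * ‖hM.band N * X * hM.band N‖ := norm_le_four_mul_norm_mul_mul hN X
    _ = 4 * ‖hM.synthesis ∘L (P ∘L X ∘L hM.synthesis) ∘L P‖ := by rw [band_eq]; rfl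
    _ ≤ 4 * (2 * M * ((2 * N + 1) * ((D * S) ^ 2 * q ^ l.natAbs) * ((2 * N + 1) * (2 * M)))) := by
      gcongr
      refine (opNorm_comp_le _ _).trans ?_
      gcongr
      · exact hM.norm_synthesis_le
      · refine (opNorm_comp_le _ _).trans ?_
        gcongr
    _ = _ := by ring

/-- The a priori bound for the finite partial sums of the diagonal `l`: the estimate of
`partialSumsBoundedBy_mul_shift_of_band` with `N = |l|`. -/
noncomputable def diagonalBound (D q M : ℝ) (l : ℤ) : ℝ :=
  4 * ((2 * l.natAbs + 1) * (2 * M) * (D * ∑' i : ℤ, q ^ i.natAbs)) ^ 2 * q ^ l.natAbs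

theorem summable_diagonalBound (D M : ℝ) (hq₀ : 0 ≤ q) (hq₁ : q < 1) :
    Summable (diagonalBound D q M) := by
  have on_nat : Summable fun n : ℕ => (2 * (n : ℝ) + 1) ^ 2 * q ^ n := by
    have power (k : ℕ) : Summable fun n : ℕ => (n : ℝ) ^ k * q ^ n :=
      summable_pow_mul_geometric_of_norm_lt_one k (by rwa [Real.norm_of_nonneg hq₀])
    exact (((power 2).mul_left 4).add (((power 1).mul_left 4).add (power 0))).congr
      fun n => by ring
  have on_int : Summable fun l : ℤ => (2 * (l.natAbs : ℝ) + 1) ^ 2 * q ^ l.natAbs :=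
    .of_nat_of_neg (by simpa using on_nat) (by simpa using on_nat)
  exact (on_int.mul_left (4 * (2 * M * (D * ∑' i : ℤ, q ^ i.natAbs)) ^ 2)).congr fun l => by
    rw [diagonalBound]
    ring

-- Downward induction on `N`: if `band n` is close to `1` for all `n > N`, then the diagonals beyond
-- `N` obey the bound, and hence `band N` is close to `1`.
theorem norm_one_sub_band_le_half (hT : AlmostOrthogonal T D q) (hq₀ : 0 ≤ q) (hq₁ : q < 1)
    (hM : PartialSumsBoundedBy T M) (hMD : M ^ 2 ≤ D) (hone : HasSum hM.diagonal 1) {N₀ : ℕ}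
    (hN₀ : ∀ N ≥ N₀, ∑' l : {l // l ∉ Finset.Icc (-(N : ℤ)) N}, diagonalBound D q M l ≤ 1 / 2)
    {N : ℕ} (hN : N₀ ≤ N) : ‖1 - hM.band N‖ ≤ 1 / 2 := by
  have hρ := summable_diagonalBound D M hq₀ hq₁
  obtain ⟨n₀, hn₀⟩ := eventually_atTop.1
    ((hM.tendsto_norm_one_sub_band hone).eventually_le_const one_half_pos)
  revert hN
  induction N using Nat.strong_decreasing_induction with
  | base => exact ⟨n₀, fun n hn _ => hn₀ n hn.le⟩
  | step N ih =>
    intro hN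
    refine (hM.norm_one_sub_band_le hone hρ N fun l hl => ?_).trans (hN₀ N hN)
    exact hM.norm_diagonal_le <|
      hT.partialSumsBoundedBy_mul_shift_of_band hq₀ hq₁ hM hMD (ih _ hl (hN.trans hl.le)) l

theorem partialSumsBoundedBy_mul_shift (hT : AlmostOrthogonal T D q) (hq₀ : 0 ≤ q)
    (hq₁ : q < 1) (hM : PartialSumsBoundedBy T M) (hMD : M ^ 2 ≤ D) (hone : HasSum hM.diagonal 1)
    {N₀ : ℕ}
    (hN₀ : ∀ N ≥ N₀, ∑' l : {l // l ∉ Finset.Icc (-(N : ℤ)) N}, diagonalBound D q M l ≤ 1 / 2)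
    {l : ℤ} (hl : N₀ ≤ l.natAbs) :
    PartialSumsBoundedBy (fun j => T j * T (j + l)) (diagonalBound D q M l) :=
  hT.partialSumsBoundedBy_mul_shift_of_band hq₀ hq₁ hM hMD
    (hT.norm_one_sub_band_le_half hq₀ hq₁ hM hMD hone hN₀ hl) l

end AlmostOrthogonal

end DiagonalSums

section DoubleSeries

theorem hasSum_prod_of_forall_norm_sum_le {ι κ E : Type*} [NormedAddCommGroup E] [CompleteSpace E]
    {x : ι × κ → E} {y : κ → E} {c : κ → ℝ} (hc : Summable c)
    (hbound : ∀ l (F : Finset ι), ‖∑ j ∈ F, x (j, l)‖ ≤ c l)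
    (hy : ∀ l, HasSum (fun j => x (j, l)) (y l)) : HasSum x (∑' l, y l) := by
  classical
  let fiber (G : Finset (ι × κ)) (l : κ) : Finset ι :=
    G.preimage (fun j => (j, l)) (Prod.mk_left_injective l).injOn
  have sum_eq (G : Finset (ι × κ)) : ∑ p ∈ G, x p = ∑' l, ∑ j ∈ fiber G l, x (j, l) := by
    rw [tsum_eq_sum (s := G.image Prod.snd)]
    · refine Finset.sum_finset_product_right G _ _ fun p => ?_
      simp only [fiber, Finset.mem_image, Finset.mem_preimage, iff_and_self]
      exact fun hp => ⟨p, hp, rfl⟩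
    · refine fun l hl => Finset.sum_eq_zero fun j hj => absurd ?_ hl
      exact Finset.mem_image.2 ⟨(j, l), by simpa [fiber] using hj, rfl⟩
  have fiber_tendsto (l : κ) : Tendsto (fun G => fiber G l) atTop atTop :=
    Monotone.tendsto_atTop_finset (Finset.monotone_preimage (Prod.mk_left_injective l)) fun j =>
      ⟨{(j, l)}, by simp [fiber]⟩
  refine (tendsto_tsum_of_dominated_convergence hc (fun l => (hy l).comp (fiber_tendsto l))
    (Eventually.of_forall fun G l => hbound l (fiber G l))).congr fun G => (sum_eq G).symm

namespace PartialSumsBoundedBy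

variable {𝕜 H : Type*} [RCLike 𝕜] [NormedAddCommGroup H] [InnerProductSpace 𝕜 H]
  [CompleteSpace H] {T : ℤ → H →L[𝕜] H} {M : ℝ} {c : ℤ → ℝ}

theorem hasSum_mul_shift_ite (hM : PartialSumsBoundedBy T M) (hc : Summable c)
    (hdiag : ∀ l, PartialSumsBoundedBy (fun j => T j * T (j + l)) (c l)) (P : ℤ → Prop)
    [DecidablePred P] (f : H) :
    HasSum (fun p : ℤ × ℤ => if P p.2 then T p.1 (T (p.1 + p.2) f) else 0)
      (∑' l, if P l then hM.diagonal l f else 0) := by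
  refine hasSum_prod_of_forall_norm_sum_le (hc.mul_right ‖f‖) (fun l F => ?_) fun l => ?_
  · by_cases hl : P l
    · simpa only [hl, if_true, mul_apply_eq_comp] using (hdiag l).norm_sum_apply_le F f
    · simpa [hl] using mul_nonneg (hdiag l).nonneg (norm_nonneg f)
  · by_cases hl : P l
    · simpa only [hl, if_true] using hM.hasSum_diagonal l f
    · simpa only [hl, if_false] using hasSum_zero

theorem hasSum_diagonal_one (hM : PartialSumsBoundedBy T M) (hc : Summable c)
    (hdiag : ∀ l, PartialSumsBoundedBy (fun j => T j * T (j + l)) (c l))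
    (hsum : ∀ f, HasSum (fun j => T j f) f) : HasSum hM.diagonal 1 := by
  have summable_diagonal : Summable hM.diagonal :=
    .of_norm_bounded hc fun l => hM.norm_diagonal_le (hdiag l)
  convert summable_diagonal.hasSum
  ext f
  have by_diagonals :
      HasSum (fun p : ℤ × ℤ => T p.1 (T (p.1 + p.2) f)) (∑' l, hM.diagonal l f) := by
    simpa using hM.hasSum_mul_shift_ite hc hdiag (fun _ => True) f
  have by_rows (j : ℤ) : HasSum (fun l => T j (T (j + l) f)) (T j f) :=
    (T j).hasSum ((Equiv.addLeft j).hasSum_iff.2 (hsum f))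
  calc f = ∑' l, hM.diagonal l f := (hsum f).unique (by_diagonals.prod_fiberwise by_rows)
    _ = (∑' l, hM.diagonal l) f := (summable_diagonal.hasSum.mapL (apply 𝕜 H f)).tsum_eq

end PartialSumsBoundedBy

end DoubleSeries

section Truncation

/-- The point of `[-n, n]` closest to `k`. Regrouping a family along `clamp n` truncates it to
finitely many terms without changing its sum. -/
def clamp (n : ℕ) (k : ℤ) : ℤ :=
  max (-n) (min n k)

theorem natAbs_clamp_le (n : ℕ) (k : ℤ) : (clamp n k).natAbs ≤ n := by
  grind [clamp]

theorem clamp_eq_iff {n : ℕ} {j : ℤ} (hj : j.natAbs < n) (k : ℤ) : clamp n k = j ↔ k = j := by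
  grind [clamp]

theorem natAbs_clamp_sub_clamp_add_le {n : ℕ} {a b : ℤ} (h : clamp n a ≠ clamp n b) :
    (clamp n a - clamp n b).natAbs + (a - clamp n a).natAbs + (b - clamp n b).natAbs ≤
      (a - b).natAbs := by
  unfold clamp at *
  omega

variable {𝕜 H : Type*} [RCLike 𝕜] [NormedAddCommGroup H] [InnerProductSpace 𝕜 H]
  [CompleteSpace H] {T : ℤ → H →L[𝕜] H} {D q M : ℝ}

theorem PartialSumsBoundedBy.hasSum_diagonal_one_of_eq_zero (hM : PartialSumsBoundedBy T M)
    (hsum : ∀ f, HasSum (fun j => T j f) f) {n : ℕ} (hzero : ∀ j : ℤ, n < j.natAbs → T j = 0) :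
    HasSum hM.diagonal 1 := by
  let s := Finset.Icc (-(2 * n : ℤ)) (2 * n)
  refine hM.hasSum_diagonal_one (c := fun l => if l ∈ s then (2 * M) ^ 2 else 0)
    (summable_of_ne_finset_zero (s := s) fun l hl => if_neg hl) (fun l => ?_) hsum
  by_cases hl : l ∈ s
  · simpa only [if_pos hl] using hM.mul_shift l
  intro F
  rw [if_neg hl, Finset.sum_eq_zero fun j _ => ?_, norm_zero]
  rw [Finset.mem_Icc] at hl
  rcases lt_or_ge n j.natAbs with hj | hj
  · rw [hzero j hj, zero_mul]
  · rw [hzero (j + l) (by omega), mul_zero]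

-- Each finite partial sum of a diagonal of `T` is one of a truncation of `T`, and the a priori
-- bound holds for all truncations with the same constants.
theorem AlmostOrthogonal.partialSumsBoundedBy_mul_shift_of_hasSum (hT : AlmostOrthogonal T D q)
    (hq₀ : 0 ≤ q) (hq₁ : q < 1) (hM : PartialSumsBoundedBy T M)
    (hsum : ∀ f, HasSum (fun j => T j f) f) {D' : ℝ}
    (hD' : D' = M ^ 2 + D * (∑' i : ℤ, q ^ i.natAbs) ^ 2) {N₀ : ℕ}
    (hN₀ : ∀ N ≥ N₀, ∑' l : {l // l ∉ Finset.Icc (-(N : ℤ)) N}, diagonalBound D' q M l ≤ 1 / 2)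
    {l : ℤ} (hl : N₀ ≤ l.natAbs) :
    PartialSumsBoundedBy (fun j => T j * T (j + l)) (diagonalBound D' q M l) := by
  intro F
  obtain ⟨n, hn⟩ : ∃ n : ℕ, ∀ j ∈ F, j.natAbs < n ∧ (j + l).natAbs < n :=
    ⟨F.sup (fun j => j.natAbs + l.natAbs) + 1, fun j hj => by
      have := F.le_sup (f := fun j => j.natAbs + l.natAbs) hj
      omega⟩
  obtain ⟨U, hU⟩ := hM.exists_isFiberwiseSum (fun f => (hsum f).summable) (clamp n)
  have eq_T {j : ℤ} (hj : j.natAbs < n) : U j = T j := hU.eq_of_unique (clamp_eq_iff hj)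
  have eq_zero (j : ℤ) (hj : n < j.natAbs) : U j = 0 :=
    hU.eq_zero fun k hk => (natAbs_clamp_le n k).not_gt (hk ▸ hj)
  have hUM := hU.partialSumsBoundedBy hM
  have hone := hUM.hasSum_diagonal_one_of_eq_zero (fun f => hU.hasSum (hsum f)) eq_zero
  have hUT : AlmostOrthogonal U D' q :=
    hD' ▸ hT.of_isFiberwiseSum hq₀ hq₁ hM hU fun _ _ => natAbs_clamp_sub_clamp_add_le
  have hMD : M ^ 2 ≤ D' :=
    hD' ▸ le_add_of_nonneg_right (mul_nonneg hT.nonneg (sq_nonneg _))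
  have same_sum : ∑ j ∈ F, T j * T (j + l) = ∑ j ∈ F, U j * U (j + l) :=
    Finset.sum_congr rfl fun j hj => by rw [eq_T (hn j hj).1, eq_T (hn j hj).2]
  rw [same_sum]
  exact hUT.partialSumsBoundedBy_mul_shift hq₀ hq₁ hUM hMD hone hN₀ hl F

theorem AlmostOrthogonal.exists_summable_partialSumsBoundedBy_mul_shift
    (hT : AlmostOrthogonal T D q) (hq₀ : 0 ≤ q) (hq₁ : q < 1) (hM : PartialSumsBoundedBy T M)
    (hsum : ∀ f, HasSum (fun j => T j f) f) :
    ∃ c : ℤ → ℝ, Summable c ∧ ∀ l, PartialSumsBoundedBy (fun j => T j * T (j + l)) (c l) := by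
  obtain ⟨D', hD'⟩ : ∃ D', D' = M ^ 2 + D * (∑' i : ℤ, q ^ i.natAbs) ^ 2 := ⟨_, rfl⟩
  obtain ⟨N₀, hN₀⟩ := eventually_atTop.1 <|
    (tendsto_tsum_notMem_Icc (c := diagonalBound D' q M)).eventually_le_const one_half_pos
  refine ⟨fun l => if N₀ ≤ l.natAbs then diagonalBound D' q M l else (2 * M) ^ 2, ?_, fun l => ?_⟩
  · refine (summable_congr_cofinite ?_).2 (summable_diagonalBound D' M hq₀ hq₁)
    filter_upwards [(Finset.Icc (-(N₀ : ℤ)) N₀).finite_toSet.compl_mem_cofinite] with l hl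
    refine if_pos ?_
    simp only [Finset.coe_Icc, Set.mem_compl_iff, Set.mem_Icc] at hl
    omega
  · dsimp only
    split_ifs with hl
    exacts [hT.partialSumsBoundedBy_mul_shift_of_hasSum hq₀ hq₁ hM hsum hD' hN₀ hl, hM.mul_shift l]

end Truncation

section Decomposition

theorem almostOrthogonal_of_norm_comp_le_rpow {𝕜 E : Type*} [NontriviallyNormedField 𝕜]
    [NormedAddCommGroup E] [NormedSpace 𝕜 E] {T : ℤ → E →L[𝕜] E} {C ε : ℝ}
    (hT : ∀ j k : ℤ, ‖(T j).comp (T k)‖ ≤ C * (2 : ℝ) ^ (-((|j - k| : ℤ) : ℝ) * ε)) :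
    AlmostOrthogonal T C ((2 : ℝ) ^ (-ε / 2)) := fun j k => by
  refine (hT j k).trans_eq ?_
  rw [← pow_mul, ← Real.rpow_natCast, ← Real.rpow_mul zero_le_two]
  congr 2
  push_cast [Nat.cast_natAbs]
  ring

theorem eventually_isUnit_and_norm_inverse_le {α R : Type*} [NormedRing R]
    [HasSummableGeomSeries R] {l : Filter α} {v : α → R} (hv : Tendsto v l (𝓝 1)) :
    ∀ᶠ a in l, IsUnit (v a) ∧ ‖Ring.inverse (v a)‖ ≤ ‖(1 : R)‖ + 1 := by
  have inverse_tendsto : Tendsto (fun a => Ring.inverse (v a)) l (𝓝 1) := by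
    simpa [Function.comp_def] using (NormedRing.inverse_continuousAt (1 : Rˣ)).tendsto.comp hv
  exact (hv.eventually (Units.nhds (1 : Rˣ))).and
    (inverse_tendsto.norm.eventually_le_const (lt_add_one _))

namespace PartialSumsBoundedBy

variable {𝕜 H : Type*} [RCLike 𝕜] [NormedAddCommGroup H] [InnerProductSpace 𝕜 H]
  [CompleteSpace H] {T : ℤ → H →L[𝕜] H} {M : ℝ}

theorem hasSum_band (hM : PartialSumsBoundedBy T M) (N : ℕ) (f : H) :
    HasSum (fun j => T j (∑ l ∈ Finset.Icc (-(N : ℤ)) N, T (j + l) f)) (hM.band N f) := by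
  simpa only [band, map_sum, sum_apply] using hasSum_sum fun l _ => hM.hasSum_diagonal l f

theorem hasSum_one_sub_band {c : ℤ → ℝ} (hM : PartialSumsBoundedBy T M) (hc : Summable c)
    (hdiag : ∀ l, PartialSumsBoundedBy (fun j => T j * T (j + l)) (c l))
    (hone : HasSum hM.diagonal 1) (N : ℕ) (f : H) :
    HasSum (fun p : ℤ × ℤ => if (N : ℤ) < |p.2| then T p.1 (T (p.1 + p.2) f) else 0)
      ((1 - hM.band N) f) := by
  have near : HasSum (fun l => if (N : ℤ) < |l| then 0 else hM.diagonal l f) (hM.band N f) := by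
    have within {l : ℤ} (hl : l ∈ Finset.Icc (-(N : ℤ)) N) : ¬(N : ℤ) < |l| :=
      not_lt.2 (abs_le.2 (Finset.mem_Icc.1 hl))
    rw [band, sum_apply, ← Finset.sum_congr rfl fun l hl => if_neg (within hl)]
    exact hasSum_sum_of_ne_finset_zero fun l hl =>
      if_pos (not_le.1 fun h => hl (Finset.mem_Icc.2 (abs_le.1 h)))
  have far : HasSum (fun l => if (N : ℤ) < |l| then hM.diagonal l f else 0)
      ((1 - hM.band N) f) :=
    ((hone.mapL (apply 𝕜 H f)).sub near).congr_fun fun l => by split_ifs <;> simp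
  exact far.tsum_eq ▸ hM.hasSum_mul_shift_ite hc hdiag (fun l => (N : ℤ) < |l|) f

end PartialSumsBoundedBy

end Decomposition

theorem tb_product_VN_RN_decomposition_general {𝕜 : Type*} [RCLike 𝕜]
    (H : Type*) [NormedAddCommGroup H] [InnerProductSpace 𝕜 H] [CompleteSpace H]
    (T : ℤ → H →L[𝕜] H) (Cc ε' : ℝ) (hε' : 0 < ε')
    (hao : ∀ j j' : ℤ, ‖(T j).comp (T j')‖ ≤ Cc * (2:ℝ) ^ (-((|j - j'| : ℤ) : ℝ) * ε'))
    (hsum : ∀ f : H, HasSum (fun j : ℤ => T j f) f) :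
    (∀ (N : ℕ) (f : H),
      (∑' j : ℤ, T j (∑ l ∈ Finset.Icc (-(N:ℤ)) (N:ℤ), T (j + l) f)) +
        (∑' p : ℤ × ℤ, if (N:ℤ) < |p.2| then T p.1 (T (p.1 + p.2) f) else 0) = f) ∧
    (∀ δ : ℝ, 0 < δ → ∃ N₀ : ℕ, ∀ N : ℕ, N₀ ≤ N → ∀ f : H,
      ‖∑' p : ℤ × ℤ, if (N:ℤ) < |p.2| then T p.1 (T (p.1 + p.2) f) else 0‖ ≤ δ * ‖f‖) ∧
    (∃ (N₀ : ℕ) (Kc : ℝ), 0 < Kc ∧ ∀ N : ℕ, N₀ ≤ N → ∃ W : H →L[𝕜] H, ‖W‖ ≤ Kc ∧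
      (∀ f : H, W (∑' j : ℤ, T j (∑ l ∈ Finset.Icc (-(N:ℤ)) (N:ℤ), T (j + l) f)) = f) ∧
      (∀ f : H,
        (∑' j : ℤ, T j (∑ l ∈ Finset.Icc (-(N:ℤ)) (N:ℤ), T (j + l) (W f))) = f)) := by
  have hT := almostOrthogonal_of_norm_comp_le_rpow hao
  obtain ⟨M, hM⟩ := exists_partialSumsBoundedBy fun f => (hsum f).summable
  obtain ⟨c, hc, hdiag⟩ := hT.exists_summable_partialSumsBoundedBy_mul_shift (by positivity)
    (Real.rpow_lt_one_of_one_lt_of_neg one_lt_two (by linarith)) hM hsum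
  have hone := hM.hasSum_diagonal_one hc hdiag hsum
  simp only [fun N f => (hM.hasSum_band N f).tsum_eq,
    fun N f => (hM.hasSum_one_sub_band hc hdiag hone N f).tsum_eq]
  refine ⟨fun N f => ?_, fun δ hδ => ?_, ?_⟩
  · simp
  · obtain ⟨N₀, hN₀⟩ := eventually_atTop.1
      ((hM.tendsto_norm_one_sub_band hone).eventually_le_const hδ)
    exact ⟨N₀, fun N hN => le_of_opNorm_le _ (hN₀ N hN)⟩
  · obtain ⟨N₀, hN₀⟩ := eventually_atTop.1
      (eventually_isUnit_and_norm_inverse_le (hM.tendsto_band hone))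
    refine ⟨N₀, ‖(1 : H →L[𝕜] H)‖ + 1, by positivity, fun N hN => ?_⟩
    obtain ⟨isUnit_band, norm_inverse_le⟩ := hN₀ N hN
    exact ⟨Ring.inverse (hM.band N), norm_inverse_le,
      fun f => DFunLike.congr_fun (Ring.inverse_mul_cancel _ isUnit_band) f,
      fun f => DFunLike.congr_fun (Ring.mul_inverse_cancel _ isUnit_band) f⟩

/-- Abstract form of (1.2) and [DJS, Lemma 2.2]: if `T_j` (playing the role of
`D_j M_{b₁}`) satisfy the almost-orthogonality estimate
`‖T_j T_{j'}‖ ≤ C 2^{-|j-j'|ε'}` and `Σ_j T_j = I` strongly, then with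
`𝒱_N = Σ_j T_j (Σ_{|ℓ|≤N} T_{j+ℓ})` and `ℛ_N = Σ_{|ℓ|>N} Σ_j T_j T_{j+ℓ}` one has
`𝒱_N + ℛ_N = I`, `‖ℛ_N‖ → 0`, and `𝒱_N` is invertible with uniformly bounded inverse
for `N` large. -/
theorem tb_product_VN_RN_decomposition
    (H : Type*) [NormedAddCommGroup H] [InnerProductSpace ℂ H] [CompleteSpace H]
    (T : ℤ → H →L[ℂ] H) (Cc ε' : ℝ) (hC : 0 < Cc) (hε' : 0 < ε')
    (hao : ∀ j j' : ℤ, ‖(T j).comp (T j')‖ ≤ Cc * (2:ℝ) ^ (-((|j - j'| : ℤ) : ℝ) * ε'))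
    (hsum : ∀ f : H, HasSum (fun j : ℤ => T j f) f) :
    (∀ (N : ℕ) (f : H),
      (∑' j : ℤ, T j (∑ l ∈ Finset.Icc (-(N:ℤ)) (N:ℤ), T (j + l) f)) +
        (∑' p : ℤ × ℤ, if (N:ℤ) < |p.2| then T p.1 (T (p.1 + p.2) f) else 0) = f) ∧
    (∀ δ : ℝ, 0 < δ → ∃ N₀ : ℕ, ∀ N : ℕ, N₀ ≤ N → ∀ f : H,
      ‖∑' p : ℤ × ℤ, if (N:ℤ) < |p.2| then T p.1 (T (p.1 + p.2) f) else 0‖ ≤ δ * ‖f‖) ∧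
    (∃ (N₀ : ℕ) (Kc : ℝ), 0 < Kc ∧ ∀ N : ℕ, N₀ ≤ N → ∃ W : H →L[ℂ] H, ‖W‖ ≤ Kc ∧
      (∀ f : H, W (∑' j : ℤ, T j (∑ l ∈ Finset.Icc (-(N:ℤ)) (N:ℤ), T (j + l) f)) = f) ∧
      (∀ f : H,
        (∑' j : ℤ, T j (∑ l ∈ Finset.Icc (-(N:ℤ)) (N:ℤ), T (j + l) (W f))) = f)) :=
  tb_product_VN_RN_decomposition_general H T Cc ε' hε' hao hsum
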